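/- For every h ∈ {0,1,…,d}, the adjacency matrices of the wreath product satisfy (A_0 + A_1 + ⋯ + A_h)² = (k_0 + k_1 + ⋯ + k_h)(A_0 + A_1 + ⋯ + A_h). -/

import Mathlib

open Finset Matrix

/-- Vertex set of the wreath product `K_{n 0} ≀ K_{n 1} ≀ ⋯ ≀ K_{n (d-1)}`
(paper indices `n_1, …, n_d` correspond to `n 0, …, n (d-1)`). -/
abbrev Vx (d : ℕ) (n : ℕ → ℕ) : Type := (i : Fin d) → Fin (n i)

/-- `delta x y = 0` if `x = y`; otherwise `delta x y` is the largest (1-based)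
index at which `x` and `y` differ. -/
def delta {d : ℕ} {n : ℕ → ℕ} (x y : Vx d n) : ℕ :=
  (Finset.univ.filter fun i => x i ≠ y i).sup fun i => (i : ℕ) + 1

/-- The `i`-th adjacency matrix of the wreath product: `(A i) x y = 1` iff `delta x y = i`. -/
noncomputable def A (d : ℕ) (n : ℕ → ℕ) (i : ℕ) : Matrix (Vx d n) (Vx d n) ℂ :=
  Matrix.of fun x y => if delta x y = i then 1 else 0

/-- The valencies: `k 0 = 1` and, for `1 ≤ i`, `k i = n_1 ⋯ n_{i-1} (n_i - 1)`,
i.e. `k i = n 0 ⋯ n (i-2) * (n (i-1) - 1)`. -/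
def k (n : ℕ → ℕ) (i : ℕ) : ℕ :=
  if i = 0 then 1 else (∏ j ∈ Finset.range (i - 1), n j) * (n (i - 1) - 1)

/-- The dual idempotent `E_i*` with respect to the base point `x₀`: the diagonal
0-1 matrix with `(E_i*)_{yy} = 1` iff `delta x₀ y = i`. -/
noncomputable def Es {d : ℕ} {n : ℕ → ℕ} (x₀ : Vx d n) (i : ℕ) :
    Matrix (Vx d n) (Vx d n) ℂ :=
  Matrix.of fun y z => if y = z ∧ delta x₀ y = i then 1 else 0

/-- The all-ones matrix `J`. -/
noncomputable def Jm (d : ℕ) (n : ℕ → ℕ) : Matrix (Vx d n) (Vx d n) ℂ :=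
  Matrix.of fun _ _ => 1

/-- The matrices `G i j`. -/
noncomputable def G {d : ℕ} {n : ℕ → ℕ} (x₀ : Vx d n) (i j : ℕ) :
    Matrix (Vx d n) (Vx d n) ℂ :=
  if i < j then ((k n j : ℂ))⁻¹ • (Es x₀ i * A d n j * Es x₀ j)
  else if j < i then ((k n j : ℂ))⁻¹ • (Es x₀ i * A d n i * Es x₀ j)
  else ((k n i : ℂ))⁻¹ • (Es x₀ i * Jm d n * Es x₀ i)

/-- The span `U` of the matrices `G i j`, `i, j ∈ [d]`. -/
noncomputable def Uspan {d : ℕ} {n : ℕ → ℕ} (x₀ : Vx d n) :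
    Submodule ℂ (Matrix (Vx d n) (Vx d n) ℂ) :=
  Submodule.span ℂ (Set.range fun p : Fin (d + 1) × Fin (d + 1) => G x₀ p.1 p.2)

/-- The Terwilliger algebra of the wreath product with respect to `x₀`. -/
noncomputable def Ter {d : ℕ} {n : ℕ → ℕ} (x₀ : Vx d n) :
    Subalgebra ℂ (Matrix (Vx d n) (Vx d n) ℂ) :=
  Algebra.adjoin ℂ
    ((Set.range fun i : Fin (d + 1) => A d n i) ∪ (Set.range fun i : Fin (d + 1) => Es x₀ i))

/-- The matrices `F i h`, for `1 ≤ i ≤ d` and `0 ≤ h ≤ i - 1`. -/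
noncomputable def F {d : ℕ} {n : ℕ → ℕ} (x₀ : Vx d n) (i h : ℕ) :
    Matrix (Vx d n) (Vx d n) ℂ :=
  if h < i - 1 then
    (∑ j ∈ Finset.range (h + 1), (k n j : ℂ))⁻¹ •
        (∑ j ∈ Finset.range (h + 1), Es x₀ i * A d n j * Es x₀ i)
      - (∑ j ∈ Finset.range (h + 2), (k n j : ℂ))⁻¹ •
          (∑ j ∈ Finset.range (h + 2), Es x₀ i * A d n j * Es x₀ i)
  else
    (∑ j ∈ Finset.range i, (k n j : ℂ))⁻¹ •
        (∑ j ∈ Finset.range i, Es x₀ i * A d n j * Es x₀ i)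
      - G x₀ i i

/-!
`A_0 + ⋯ + A_h` is the 0-1 matrix of the relation `δ(x, y) ≤ h`, that is, of agreement in all
coordinates after the `h`-th. This is an equivalence relation whose classes all have
`n_1 ⋯ n_h` elements, and this number is the telescoping sum `k_0 + ⋯ + k_h`. The square of the
0-1 matrix of an equivalence relation with classes of constant size `m` is `m` times the matrix.
-/

theorem of_ite_mul_self_of_equivalence {V R : Type*} [Fintype V] [NonAssocSemiring R]
    {r : V → V → Prop} [DecidableRel r] (hr : Equivalence r) {m : ℕ}
    (hm : ∀ x, #{y | r x y} = m) :
    (of fun x y => if r x y then (1 : R) else 0) * (of fun x y => if r x y then (1 : R) else 0)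
      = (m : R) • of fun x y => if r x y then (1 : R) else 0 := by
  ext x z
  have summand_eq (y : V) :
      (if r x y then (1 : R) else 0) * (if r y z then 1 else 0)
        = (if r x y then 1 else 0) * (if r x z then 1 else 0) := by
    by_cases hxy : r x y
    · have hyz_iff : r y z ↔ r x z := ⟨hr.trans hxy, hr.trans (hr.symm hxy)⟩
      simp only [hyz_iff]
    · simp only [hxy, if_false, zero_mul]
  simp only [mul_apply, of_apply, Matrix.smul_apply, smul_eq_mul, summand_eq, ← sum_mul, sum_boole,
    hm]

theorem sum_range_k_eq_prod {n : ℕ → ℕ} {h : ℕ} (hn : ∀ i < h, 1 ≤ n i) :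
    ∑ i ∈ range (h + 1), k n i = ∏ j ∈ range h, n j := by
  induction h with
  | zero => simp [k]
  | succ h ih =>
    calc ∑ i ∈ range (h + 2), k n i
        = ∏ j ∈ range h, n j + (∏ j ∈ range h, n j) * (n h - 1) := by
          rw [sum_range_succ, ih fun i hi => hn i (hi.trans h.lt_succ_self)]
          simp [k]
      _ = (∏ j ∈ range h, n j) * (1 + (n h - 1)) := by rw [mul_add, mul_one]
      _ = ∏ j ∈ range (h + 1), n j := by
          rw [Nat.add_sub_cancel' (hn h h.lt_succ_self), prod_range_succ]

section Delta

variable {d : ℕ} {n : ℕ → ℕ}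

theorem delta_le_iff {x y : Vx d n} {h : ℕ} :
    delta x y ≤ h ↔ ∀ i : Fin d, h ≤ i → x i = y i := by
  simp only [delta, Finset.sup_le_iff, mem_filter, mem_univ, true_and, Nat.succ_le_iff]
  exact forall_congr' fun i => not_imp_comm.trans (by rw [not_lt])

theorem equivalence_delta_le (h : ℕ) : Equivalence fun x y : Vx d n => delta x y ≤ h := by
  simp only [delta_le_iff]
  exact ⟨fun _ _ _ => rfl, fun hxy i hi => (hxy i hi).symm,
    fun hxy hyz i hi => (hxy i hi).trans (hyz i hi)⟩

theorem filter_delta_le_eq_piFinset (x : Vx d n) (h : ℕ) :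
    ({y | delta x y ≤ h} : Finset (Vx d n))
      = Fintype.piFinset fun i : Fin d => if (i : ℕ) < h then univ else {x i} := by
  ext y
  simp only [mem_filter, mem_univ, true_and, Fintype.mem_piFinset, delta_le_iff]
  refine forall_congr' fun i => ?_
  split_ifs with hi
  · simp [hi]
  · simp [not_lt.mp hi, eq_comm]

theorem card_filter_delta_le (x : Vx d n) {h : ℕ} (hh : h ≤ d) :
    #{y | delta x y ≤ h} = ∏ j ∈ range h, n j := by
  have range_filter_lt : {j ∈ range d | j < h} = range h := by
    ext j
    simpa using fun hj : j < h => hj.trans_le hh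
  calc #{y | delta x y ≤ h}
      = ∏ i : Fin d, if (i : ℕ) < h then n i else 1 := by
        simp [filter_delta_le_eq_piFinset, apply_ite card]
    _ = ∏ j ∈ range d, if j < h then n j else 1 :=
        Fin.prod_univ_eq_prod_range (fun j => if j < h then n j else 1) d
    _ = ∏ j ∈ range h, n j := by rw [← prod_filter, range_filter_lt]

theorem sum_range_A_eq_of_ite_delta_le (h : ℕ) :
    ∑ i ∈ range (h + 1), A d n i = of fun x y => if delta x y ≤ h then 1 else 0 := by
  ext x y
  simp [Matrix.sum_apply, A]

end Delta

/-- `(A 0 + A 1 + ⋯ + A h)² = (k 0 + k 1 + ⋯ + k h)(A 0 + A 1 + ⋯ + A h)`. -/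
theorem stmt8 (d : ℕ) (hd : 1 ≤ d) (n : ℕ → ℕ) (hn : ∀ i < d, 2 ≤ n i)
    (h : ℕ) (hh : h ≤ d) :
    (∑ i ∈ Finset.range (h + 1), A d n i) * (∑ i ∈ Finset.range (h + 1), A d n i)
      = (∑ i ∈ Finset.range (h + 1), (k n i : ℂ)) • (∑ i ∈ Finset.range (h + 1), A d n i) := by
  have one_le_n : ∀ i < h, 1 ≤ n i := fun i hi => one_le_two.trans (hn i (hi.trans_le hh))
  rw [← Nat.cast_sum, sum_range_k_eq_prod one_le_n, sum_range_A_eq_of_ite_delta_le]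
  exact of_ite_mul_self_of_equivalence (equivalence_delta_le h) fun x => card_filter_delta_le x hh
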